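/- Let (P_A)_{A ⊊ N} be an equimarginal family of probability distributions on the proper subsets of N = {1,…,n}. Then the P_A are the marginals of a single probability distribution P on {0,1}^n if and only if for each subset A ⊆ N with an odd number of elements and all x ∈ {0,1}^n, 0 ≤ Σ_{B ⊊ N, A∪B = N} (−1)^{|A∩B|} P_B(x) ≤ 1 (where the term with B = ∅, which occurs only when A = N, uses P_∅ ≡ the constant function 1). -/

import Mathlib

/-- Flip the coordinates of `x ∈ {0,1}ⁿ` indexed by `A`. -/
def flipOn {n : ℕ} (A : Finset (Fin n)) (x : Fin n → Bool) : Fin n → Bool :=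
  fun i => if i ∈ A then !(x i) else x i

/-- The bit-flip operator `κ_A`, the composite of the `κ_i` over `i ∈ A`:
`(κ_A f)(x) = f(x with coordinates in A flipped)`. -/
def kop {n : ℕ} (A : Finset (Fin n)) (f : (Fin n → Bool) → ℝ) : (Fin n → Bool) → ℝ :=
  fun x => f (flipOn A x)

/-- The operator `M_A`, the composite of the commuting operators
`(M_i f)(x) = f(x) + f(x with i-th coordinate flipped)` over `i ∈ A`;
equivalently `(M_A f)(x) = Σ_{B ⊆ A} f(x with coordinates in B flipped)`. -/
def Mop {n : ℕ} (A : Finset (Fin n)) (f : (Fin n → Bool) → ℝ) : (Fin n → Bool) → ℝ :=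
  fun x => ∑ B ∈ A.powerset, f (flipOn B x)

/-- A probability distribution on the subset `A ⊆ N` of the binary variables:
a nonnegative function on `{0,1}ⁿ`, constant in the coordinates outside `A`,
with `M_A P_A` the constant function 1. -/
def IsDistOn {n : ℕ} (A : Finset (Fin n)) (f : (Fin n → Bool) → ℝ) : Prop :=
  (∀ x, 0 ≤ f x) ∧ (∀ i, i ∉ A → kop {i} f = f) ∧ Mop A f = fun _ => (1 : ℝ)

/-- A family `(P_A)_{A ⊊ N}` of distributions on the proper subsets of `N` is
equimarginal if `M_{B∖A} P_B = M_{C∖A} P_C` whenever `A ⊆ B ∩ C` with `B, C ⊊ N`. -/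
def Equimarginal {n : ℕ} (P : Finset (Fin n) → (Fin n → Bool) → ℝ) : Prop :=
  ∀ A B C : Finset (Fin n), B ⊂ Finset.univ → C ⊂ Finset.univ → A ⊆ B → A ⊆ C →
    Mop (B \ A) (P B) = Mop (C \ A) (P C)

/-- The sign function `σ_A(x) = Π_{i∈A} (-1)^{x_i}`. -/
def sigmaFn {n : ℕ} (A : Finset (Fin n)) (x : Fin n → Bool) : ℝ :=
  ∏ i ∈ A, (if x i then (-1 : ℝ) else 1)

/-! Write `M_i`, `κ_i` for the one-coordinate operators. Expanding `κ_A = ∏ (M_i - 1)` shows that,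
for odd `A`, the alternating sum of the theorem is `Q x + Q (flipOn A x)` for every function `Q`
with the marginals `P_B`, so it lies in `[0, 1]` when `Q` is a probability distribution.

Conversely, `∏ (1 - M_i / 2)` is the projection onto the line spanned by the full sign function
`σ_N`. Expanding `1 - ∏ (1 - M_i / 2)` and replacing `M_A Q` by `P_{N ∖ A}` therefore gives a signed
function with the prescribed marginals, and adding any multiple of `σ_N` keeps the marginals.
Nonnegativity of the alternating sums says that the values of this function at two points of
opposite parity have a nonnegative sum, which is exactly what is needed for some multiple of `σ_N`
to make it nonnegative. -/

section

open Finset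

variable {n : ℕ} {A B : Finset (Fin n)} {P : Finset (Fin n) → (Fin n → Bool) → ℝ}
  {Q : (Fin n → Bool) → ℝ}

/-- A signed probability distribution on `A ⊆ N`: a real-valued function with all the properties of
`IsDistOn A` except nonnegativity. -/
def IsSignedDistOn (A : Finset (Fin n)) (f : (Fin n → Bool) → ℝ) : Prop :=
  (∀ i, i ∉ A → kop {i} f = f) ∧ Mop A f = fun _ => (1 : ℝ)

/-- `HasMarginals Q P` says that the marginals of `Q` over the proper subsets of `N` are the
members of the family `P`. -/
def HasMarginals (Q : (Fin n → Bool) → ℝ) (P : Finset (Fin n) → (Fin n → Bool) → ℝ) : Prop :=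
  ∀ A : Finset (Fin n), A ⊂ univ → Mop (univ \ A) Q = P A

/-- The sum `Σ_{B ⊊ N, A ∪ B = N} (-1)^{|A ∩ B|} P_B(x)` whose bounds, for odd `A`, characterize the
families of marginals. -/
def alternatingSum (P : Finset (Fin n) → (Fin n → Bool) → ℝ) (A : Finset (Fin n))
    (x : Fin n → Bool) : ℝ :=
  ∑ B ∈ univ.filter (fun B : Finset (Fin n) => B ⊂ univ ∧ A ∪ B = univ),
    (-1 : ℝ) ^ (A ∩ B).card * P B x

/-- The expansion of `1 - ∏ (1 - M_i / 2)` with `P Aᶜ` in place of `M_A Q`: a signed function whose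
marginals are the members of an equimarginal family `P`. -/
noncomputable def signedExtension (P : Finset (Fin n) → (Fin n → Bool) → ℝ)
    (x : Fin n → Bool) : ℝ :=
  ∑ A : Finset (Fin n) with A.Nonempty, -(-1 / 2 : ℝ) ^ #A * P Aᶜ x

theorem compl_ssubset_univ {α : Type*} [Fintype α] [DecidableEq α] {s : Finset α}
    (hs : s.Nonempty) : sᶜ ⊂ univ := by
  simpa [ssubset_univ_iff] using hs.ne_empty

theorem flipOn_empty (x : Fin n → Bool) : flipOn ∅ x = x := by
  funext i
  simp [flipOn]

theorem flipOn_insert {i : Fin n} (hi : i ∉ A) (x : Fin n → Bool) :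
    flipOn (insert i A) x = flipOn {i} (flipOn A x) := by
  funext j
  by_cases h : j = i
  · subst h; simp [flipOn, hi]
  · simp [flipOn, h]

theorem flipOn_filter_ne (x y : Fin n → Bool) : flipOn {i | x i ≠ y i} x = y := by
  funext j
  cases hx : x j <;> cases hy : y j <;> simp [flipOn, hx, hy]

theorem mop_empty (f : (Fin n → Bool) → ℝ) : Mop ∅ f = f := by
  funext x
  simp [Mop, flipOn_empty]

theorem mop_singleton_apply (i : Fin n) (f : (Fin n → Bool) → ℝ) (x : Fin n → Bool) :
    Mop {i} f x = f x + f (flipOn {i} x) := by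
  rw [Mop, ← insert_empty_eq i, sum_powerset_insert (notMem_empty i)]
  simp [flipOn_empty]

theorem mop_insert {i : Fin n} (hi : i ∉ A) (f : (Fin n → Bool) → ℝ) :
    Mop (insert i A) f = Mop A (Mop {i} f) := by
  funext x
  change ∑ B ∈ (insert i A).powerset, f (flipOn B x) = ∑ B ∈ A.powerset, Mop {i} f (flipOn B x)
  rw [sum_powerset_insert hi, ← sum_add_distrib]
  refine sum_congr rfl fun B hB => ?_
  rw [mop_singleton_apply, flipOn_insert (notMem_of_mem_powerset_of_notMem hB hi)]

theorem mop_sub_apply (A : Finset (Fin n)) (f g : (Fin n → Bool) → ℝ) (x : Fin n → Bool) :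
    Mop A (f - g) x = Mop A f x - Mop A g x := by
  simp [Mop]

theorem mop_singleton_of_kop_eq {i : Fin n} {f : (Fin n → Bool) → ℝ} (hf : kop {i} f = f)
    (x : Fin n → Bool) : Mop {i} f x = 2 * f x := by
  rw [mop_singleton_apply, show f (flipOn {i} x) = f x from congrFun hf x, two_mul]

/-- The expansion of `κ_A = ∏_{i ∈ A} (M_i - 1)`. -/
theorem apply_flipOn_eq_sum_mop (A : Finset (Fin n)) (f : (Fin n → Bool) → ℝ) (x : Fin n → Bool) :
    f (flipOn A x) = ∑ C ∈ A.powerset, (-1 : ℝ) ^ #(A \ C) * Mop C f x := by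
  induction A using Finset.induction_on generalizing f with
  | empty => simp [flipOn_empty, mop_empty]
  | insert i A hi ih =>
    have hstep : f (flipOn (insert i A) x) = (Mop {i} f - f) (flipOn A x) := by
      rw [Pi.sub_apply, mop_singleton_apply, flipOn_insert hi, add_sub_cancel_left]
    rw [hstep, ih (Mop {i} f - f), sum_powerset_insert hi, ← sum_add_distrib]
    refine sum_congr rfl fun C hC => ?_
    have hiC : i ∉ C := notMem_of_mem_powerset_of_notMem hC hi
    rw [mop_sub_apply, ← mop_insert hiC, insert_sdiff_of_notMem _ hiC, insert_sdiff_insert,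
      sdiff_insert_of_notMem hi, card_insert_of_notMem (by simp [hi])]
    ring

theorem alternatingSum_eq_sum_powerset (P : Finset (Fin n) → (Fin n → Bool) → ℝ)
    (A : Finset (Fin n)) (x : Fin n → Bool) :
    alternatingSum P A x = ∑ C ∈ A.powerset.erase ∅, (-1 : ℝ) ^ #(A \ C) * P Cᶜ x := by
  have hcover : ∀ B : Finset (Fin n), A ∪ B = univ ↔ Bᶜ ⊆ A := fun B => by
    rw [← Finset.top_eq_univ, ← sup_eq_union, ← codisjoint_iff, codisjoint_iff_compl_le_left]
  refine sum_nbij' compl compl ?_ ?_ (by simp) (by simp) ?_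
  · intro B hB
    simp only [mem_filter, mem_univ, true_and, ssubset_univ_iff] at hB
    simpa [hB.1, hcover] using hB.2
  · intro C hC
    simpa [ssubset_univ_iff, hcover] using hC
  · intro B _
    rw [compl_compl, sdiff_compl, inf_eq_inter]

theorem HasMarginals.alternatingSum_eq (hQ : HasMarginals Q P) (A : Finset (Fin n))
    (x : Fin n → Bool) :
    alternatingSum P A x = Q (flipOn A x) - (-1) ^ #A * Q x := by
  have hP : ∀ C ∈ A.powerset.erase ∅, P Cᶜ = Mop C Q := by
    intro C hC
    rw [← hQ Cᶜ (by simpa [ssubset_univ_iff] using (mem_erase.1 hC).1), ← compl_eq_univ_sdiff,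
      compl_compl]
  rw [alternatingSum_eq_sum_powerset, apply_flipOn_eq_sum_mop A Q,
    ← add_sum_erase _ _ (empty_mem_powerset A), sdiff_empty, mop_empty, add_sub_cancel_left]
  exact sum_congr rfl fun C hC => by rw [hP C hC]

theorem HasMarginals.alternatingSum_eq_add (hQ : HasMarginals Q P) (hA : Odd #A)
    (x : Fin n → Bool) : alternatingSum P A x = Q x + Q (flipOn A x) := by
  rw [hQ.alternatingSum_eq, hA.neg_one_pow]
  ring

theorem IsDistOn.add_flipOn_le_one (hQ : IsDistOn univ Q) (hA : A.Nonempty) (x : Fin n → Bool) :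
    Q x + Q (flipOn A x) ≤ 1 := by
  calc Q x + Q (flipOn A x) = ∑ B ∈ {∅, A}, Q (flipOn B x) := by
        rw [sum_pair hA.ne_empty.symm, flipOn_empty]
    _ ≤ ∑ B ∈ (univ : Finset (Fin n)).powerset, Q (flipOn B x) :=
        sum_le_sum_of_subset_of_nonneg (by simp) fun B _ _ => hQ.1 _
    _ = 1 := congrFun hQ.2.2 x

theorem Equimarginal.mop_sdiff (hP : Equimarginal P) (hAB : A ⊆ B) (hB : B ⊂ univ) :
    Mop (B \ A) (P B) = P A := by
  rw [hP A B A hB (hAB.trans_ssubset hB) hAB subset_rfl, Finset.sdiff_self, mop_empty]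

theorem Equimarginal.mop_singleton_compl (hP : Equimarginal P) {i : Fin n} (hA : A.Nonempty)
    (hi : i ∉ A) : Mop {i} (P Aᶜ) = P (insert i A)ᶜ := by
  have hsdiff : Aᶜ \ (insert i A)ᶜ = {i} := by
    grind [mem_compl]
  rw [← hsdiff]
  exact hP.mop_sdiff (compl_subset_compl.2 (subset_insert i A)) (compl_ssubset_univ hA)

theorem Equimarginal.hasMarginals_of_mop_singleton (hP : Equimarginal P)
    (hQ : ∀ i, Mop {i} Q = P {i}ᶜ) : HasMarginals Q P := by
  intro A hA
  obtain ⟨i, -, hi⟩ := exists_of_ssubset hA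
  have hsplit : univ \ A = insert i ({i}ᶜ \ A) := by
    grind [mem_compl]
  rw [hsplit, mop_insert (by simp), hQ]
  exact hP.mop_sdiff (subset_compl_singleton.2 hi) (compl_ssubset_univ (singleton_nonempty i))

theorem mop_singleton_signedExtension
    (hP : ∀ A : Finset (Fin n), A ⊂ univ → IsSignedDistOn A (P A)) (hequi : Equimarginal P)
    (i : Fin n) : Mop {i} (signedExtension P) = P {i}ᶜ := by
  funext x
  have hlin : Mop {i} (signedExtension P) x =
      ∑ A : Finset (Fin n) with A.Nonempty, -(-1 / 2 : ℝ) ^ #A * Mop {i} (P Aᶜ) x := by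
    simp only [mop_singleton_apply, signedExtension, mul_add, sum_add_distrib]
  have hmem : ∀ A : Finset (Fin n), i ∈ A → Mop {i} (P Aᶜ) x = 2 * P Aᶜ x := fun A hi =>
    mop_singleton_of_kop_eq ((hP _ (compl_ssubset_univ ⟨i, hi⟩)).1 i (by simpa using hi)) x
  have huniv : (univ : Finset (Finset (Fin n))) = (insert i {i}ᶜ : Finset (Fin n)).powerset := by
    rw [insert_compl_self, powerset_univ]
  rw [hlin, sum_filter, huniv, sum_powerset_insert (by simp), ← sum_add_distrib,
    sum_eq_single_of_mem ∅ (empty_mem_powerset _)]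
  · simp only [Finset.not_nonempty_empty, insert_empty_eq, singleton_nonempty, card_singleton,
      ↓reduceIte, pow_one, hmem {i} (mem_singleton_self i)]
    ring
  · intro A hA hne
    have hA' : A.Nonempty := nonempty_iff_ne_empty.2 hne
    have hi : i ∉ A := notMem_of_mem_powerset_of_notMem hA (by simp)
    rw [if_pos hA', if_pos (insert_nonempty i A), hmem _ (mem_insert_self i A),
      hequi.mop_singleton_compl hA' hi, card_insert_of_notMem hi]
    ring

theorem sigmaFn_mul_self (A : Finset (Fin n)) (x : Fin n → Bool) :
    sigmaFn A x * sigmaFn A x = 1 := by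
  rw [sigmaFn, ← prod_mul_distrib]
  exact prod_eq_one fun i _ => by split_ifs <;> norm_num

theorem sigmaFn_flipOn (A B : Finset (Fin n)) (x : Fin n → Bool) :
    sigmaFn A (flipOn B x) = (-1) ^ #(A ∩ B) * sigmaFn A x := by
  have hsign : (-1 : ℝ) ^ #(A ∩ B) = ∏ i ∈ A, if i ∈ B then (-1 : ℝ) else 1 := by
    rw [prod_ite_mem, prod_const]
  rw [hsign, sigmaFn, sigmaFn, ← prod_mul_distrib]
  refine prod_congr rfl fun i _ => ?_
  by_cases hi : i ∈ B <;> cases hx : x i <;> simp [flipOn, hi, hx]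

theorem mop_singleton_add_sigmaFn (i : Fin n) (f : (Fin n → Bool) → ℝ) (c : ℝ) :
    Mop {i} (fun x => f x + c * sigmaFn univ x) = Mop {i} f := by
  funext x
  simp only [mop_singleton_apply, sigmaFn_flipOn, univ_inter, card_singleton, pow_one]
  ring

theorem exists_nonneg_add_mul_sigmaFn {f : (Fin n → Bool) → ℝ}
    (hf : ∀ A : Finset (Fin n), Odd #A → ∀ x, 0 ≤ f x + f (flipOn A x)) :
    ∃ c : ℝ, ∀ x, 0 ≤ f x + c * sigmaFn univ x := by
  obtain ⟨x₀, hmin⟩ := Finite.exists_min f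
  refine ⟨-f x₀ * sigmaFn univ x₀, fun x => ?_⟩
  set D : Finset (Fin n) := {i | x₀ i ≠ x i}
  have hD : flipOn D x₀ = x := flipOn_filter_ne x₀ x
  have hsign : sigmaFn univ x₀ * sigmaFn univ x = (-1) ^ #D := by
    rw [← hD, sigmaFn_flipOn, univ_inter, mul_left_comm, sigmaFn_mul_self, mul_one]
  rw [mul_assoc, hsign]
  rcases Nat.even_or_odd #D with heven | hodd
  · rw [heven.neg_one_pow]
    linarith [hmin x]
  · have hpair : 0 ≤ f x₀ + f x := hD ▸ hf D hodd x₀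
    rw [hodd.neg_one_pow]
    linarith

theorem exists_nonneg_hasMarginals
    (hP : ∀ A : Finset (Fin n), A ⊂ univ → IsSignedDistOn A (P A)) (hequi : Equimarginal P)
    (hsum : ∀ A : Finset (Fin n), Odd #A → ∀ x, 0 ≤ alternatingSum P A x) :
    ∃ Q : (Fin n → Bool) → ℝ, (∀ x, 0 ≤ Q x) ∧ HasMarginals Q P := by
  have hsingle := mop_singleton_signedExtension hP hequi
  have hext : HasMarginals (signedExtension P) P := hequi.hasMarginals_of_mop_singleton hsingle
  obtain ⟨c, hc⟩ := exists_nonneg_add_mul_sigmaFn fun A hA x =>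
    hext.alternatingSum_eq_add hA x ▸ hsum A hA x
  refine ⟨_, hc, hequi.hasMarginals_of_mop_singleton fun i => ?_⟩
  rw [mop_singleton_add_sigmaFn, hsingle]

theorem HasMarginals.isDistOn_univ [Nonempty (Fin n)] (hQ : HasMarginals Q P)
    (hP : IsSignedDistOn ∅ (P ∅)) (hnonneg : ∀ x, 0 ≤ Q x) : IsDistOn univ Q := by
  refine ⟨hnonneg, fun i hi => absurd (mem_univ i) hi, ?_⟩
  rw [← sdiff_empty (s := univ), hQ ∅ (empty_ssubset.2 univ_nonempty), ← hP.2, mop_empty]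

theorem exists_isDistOn_univ_hasMarginals_of_isEmpty [IsEmpty (Fin n)]
    (P : Finset (Fin n) → (Fin n → Bool) → ℝ) :
    ∃ Q : (Fin n → Bool) → ℝ, IsDistOn univ Q ∧ HasMarginals Q P := by
  refine ⟨fun _ => 1, ⟨fun _ => zero_le_one, isEmptyElim, ?_⟩, fun A hA => ?_⟩
  · funext x; simp [Mop]
  · exact absurd (Subsingleton.elim A univ) hA.ne

theorem stmt_3_general (hP : ∀ A : Finset (Fin n), A ⊂ univ → IsSignedDistOn A (P A))
    (hequi : Equimarginal P) :
    List.TFAE [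
      ∃ Q : (Fin n → Bool) → ℝ, IsDistOn univ Q ∧ HasMarginals Q P,
      ∀ A : Finset (Fin n), Odd #A → ∀ x, 0 ≤ alternatingSum P A x ∧ alternatingSum P A x ≤ 1,
      ∀ A : Finset (Fin n), Odd #A → ∀ x, 0 ≤ alternatingSum P A x] := by
  tfae_have 1 → 2 := by
    rintro ⟨Q, hdist, hQ⟩ A hA x
    rw [hQ.alternatingSum_eq_add hA]
    exact ⟨add_nonneg (hdist.1 _) (hdist.1 _), hdist.add_flipOn_le_one (card_pos.1 hA.pos) x⟩
  tfae_have 2 → 3 := fun h A hA x => (h A hA x).1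
  tfae_have 3 → 1 := by
    intro hsum
    cases isEmpty_or_nonempty (Fin n)
    · exact exists_isDistOn_univ_hasMarginals_of_isEmpty P
    · obtain ⟨Q, hnonneg, hQ⟩ := exists_nonneg_hasMarginals hP hequi hsum
      exact ⟨Q, hQ.isDistOn_univ (hP ∅ (empty_ssubset.2 univ_nonempty)) hnonneg, hQ⟩
  tfae_finish

end

/-- Theorem 2 of the paper.  An equimarginal family `(P_A)_{A ⊊ N}` of
probability distributions on the proper subsets of `N = {1,…,n}` consists of the marginals
of a single probability distribution `P` on `{0,1}ⁿ` if and only if for each subset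
`A ⊆ N` with an odd number of elements and all `x`,
`0 ≤ Σ_{B ⊊ N, A∪B = N} (-1)^{|A∩B|} P_B(x) ≤ 1`. -/
theorem stmt_3 (n : ℕ) (P : Finset (Fin n) → (Fin n → Bool) → ℝ)
    (hdist : ∀ A : Finset (Fin n), A ⊂ Finset.univ → IsDistOn A (P A))
    (hequi : Equimarginal P) :
    (∃ Q : (Fin n → Bool) → ℝ, IsDistOn Finset.univ Q ∧
        ∀ A : Finset (Fin n), A ⊂ Finset.univ → Mop (Finset.univ \ A) Q = P A) ↔
      (∀ A : Finset (Fin n), Odd A.card → ∀ x : Fin n → Bool,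
        0 ≤ (∑ B ∈ Finset.univ.filter
              (fun B : Finset (Fin n) => B ⊂ Finset.univ ∧ A ∪ B = Finset.univ),
            (-1 : ℝ) ^ (A ∩ B).card * P B x) ∧
        (∑ B ∈ Finset.univ.filter
              (fun B : Finset (Fin n) => B ⊂ Finset.univ ∧ A ∪ B = Finset.univ),
            (-1 : ℝ) ^ (A ∩ B).card * P B x) ≤ 1) := by
  exact (stmt_3_general (fun A hA => (hdist A hA).2) hequi).out 0 1
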